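/- arXiv:1402.1675 — 2 statements merged into one kernel-verified Lean document; each statement's English description precedes it below -/
import Mathlib

section
/- Let K be a field of characteristic 2, and let V_8 ⊂ S_8 be the elementary abelian group of order 8 generated by (1,2)(3,4)(5,6)(7,8), (1,3)(2,4)(5,7)(6,8), and (1,5)(2,6)(3,7)(4,8), acting on K(x_1,…,x_8) by permuting the variables. Then the fixed field K(x_1,…,x_8)^{V_8} is generated over K by w_1 = x_1+x_2+x_3+x_4+x_5+x_6+x_7+x_8, w_2 = x_1x_2+x_3x_4+x_5x_6+x_7x_8, w_3 = x_1x_3+x_2x_4+x_5x_7+x_6x_8, w_4 = x_1x_4+x_2x_3+x_5x_8+x_6x_7, w_5 = x_1x_5+x_2x_6+x_3x_7+x_4x_8, w_6 = x_1x_6+x_2x_5+x_3x_8+x_4x_7, w_7 = x_1x_7+x_2x_8+x_3x_5+x_4x_6, and w_8 = x_1x_8+x_2x_7+x_3x_6+x_4x_5. -/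
noncomputable section

/-- The rational function field `K(x_i : i ∈ I)` over `K`, realized as the fraction field
of the multivariate polynomial ring. -/
abbrev RFF (K : Type) [Field K] (I : Type) := FractionRing (MvPolynomial I K)

/-- The image of the variable `x_i` in the rational function field `K(x_i : i ∈ I)`. -/
noncomputable def Xvar (K : Type) [Field K] (I : Type) (i : I) : RFF K I :=
  algebraMap (MvPolynomial I K) (RFF K I) (MvPolynomial.X i)

/-- Permutations of the variables as `K`-algebra automorphisms of the polynomial ring. -/
def renameHom (K : Type) [Field K] (I : Type) :
    Equiv.Perm I →* (MvPolynomial I K ≃ₐ[K] MvPolynomial I K) where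
  toFun σ := MvPolynomial.renameEquiv K σ
  map_one' := MvPolynomial.renameEquiv_refl K
  map_mul' σ τ := (MvPolynomial.renameEquiv_trans K τ σ).symm

/-- The action of permutations of the variables on `K(x_i : i ∈ I)` by `K`-automorphisms,
determined by `σ(x_i) = x_{σ(i)}`. -/
noncomputable def permHom (K : Type) [Field K] (I : Type) :
    Equiv.Perm I →* (RFF K I ≃ₐ[K] RFF K I) :=
  (IsFractionRing.fieldEquivOfAlgEquivHom K (RFF K I)).comp (renameHom K I)

/-- The fixed field `K(x_i : i ∈ I)^G` of a group `G` of permutations of the variables. -/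
noncomputable def fixedSub (K : Type) [Field K] (I : Type) (G : Subgroup (Equiv.Perm I)) :
    IntermediateField K (RFF K I) :=
  IntermediateField.fixedField (G.map (permHom K I))

/-- An extension `L/K` is `K`-rational if it is purely transcendental over `K`, i.e. generated
by finitely many algebraically independent elements. -/
def IsRatExt (K : Type) [Field K] (L : Type*) [Field L] [Algebra K L] : Prop :=
  ∃ (n : ℕ) (t : Fin n → L), AlgebraicIndependent K t ∧
    IntermediateField.adjoin K (Set.range t) = ⊤

/-!
Index the variables by the elements of the elementary abelian `2`-group, that is by subsets `A` of a
basis `ι`, the group acting by `x_A ↦ x_{A ∆ B}`. Put `c_S = ∑_{A ⊇ S} x_A`; the given generators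
are `c_∅` and `w_h = ∑ x_A x_{A ∆ h}`, the sum over unordered pairs, for `h ≠ ∅`. Let `E` be the
field they generate.

* Write `c_k` for `c_{{k}}`. Since `c_k (c_∅ + c_k) = ∑_{h ∋ k} w_h`, each `c_k` is a root of a
  quadratic polynomial over `E`. Translation by `{k}` moves `c_k` to `c_k + c_∅` and fixes the
  other `c_j`. Eliminating the `c_k` one at a time shows that the fixed field of the group meets
  `E(c_k : k ∈ ι)` in `E`.
* For `S ≠ ∅` and `k ∉ S`, summing `w_h` over `h ⊇ S ∪ {k}` gives
  `∑_{U ⊆ S} c_{U ∪ {k}} c_{S ∖ U}`. The term `U = S` is `c_∅ c_{S ∪ {k}}`, so all the `c_S`, and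
  with them all the `x_A`, lie in `E(c_k : k ∈ ι)`.
-/

open IntermediateField
open scoped symmDiff

section Galois

variable {K L ι : Type*} [Field K] [Field L] [Algebra K L] {E : IntermediateField K L}

theorem exists_eq_add_mul_of_mem_sup_adjoin_simple {a b c y : L} (hb : b ∈ E) (hc : c ∈ E)
    (ha : a ^ 2 = b * a + c) (hy : y ∈ E ⊔ K⟮a⟯) : ∃ u ∈ E, ∃ v ∈ E, y = u + v * a := by
  have halg : IsAlgebraic E a := by
    refine IsIntegral.isAlgebraic ⟨.X ^ 2 - (.C ⟨b, hb⟩ * .X + .C ⟨c, hc⟩),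
      Polynomial.monic_X_pow_sub (Polynomial.degree_linear_le.trans_lt (by norm_num)), ?_⟩
    simp [ha]
  rw [← restrictScalars_adjoin_eq_sup, mem_restrictScalars, ← mem_toSubalgebra,
    adjoin_simple_toSubalgebra_of_isAlgebraic halg] at hy
  induction hy using Algebra.adjoin_induction with
  | mem x hx =>
    obtain rfl : x = a := hx
    exact ⟨0, zero_mem E, 1, one_mem E, by ring⟩
  | algebraMap u => exact ⟨u, u.2, 0, zero_mem E, by simp⟩
  | add _ _ _ _ hx hy =>
    obtain ⟨u, hu, v, hv, rfl⟩ := hx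
    obtain ⟨u', hu', v', hv', rfl⟩ := hy
    exact ⟨u + u', add_mem hu hu', v + v', add_mem hv hv', by ring⟩
  | mul _ _ _ _ hx hy =>
    obtain ⟨u, hu, v, hv, rfl⟩ := hx
    obtain ⟨u', hu', v', hv', rfl⟩ := hy
    exact ⟨u * u' + v * v' * c, add_mem (mul_mem hu hu') (mul_mem (mul_mem hv hv') hc),
      u * v' + v * u' + v * v' * b,
      add_mem (add_mem (mul_mem hu hv') (mul_mem hv hu')) (mul_mem (mul_mem hv hv') hb),
      by linear_combination v * v' * ha⟩

theorem mem_of_mem_sup_adjoin_simple_of_fixed {σ : L ≃ₐ[K] L} (hσ : σ ∈ E.fixingSubgroup)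
    {a b c y : L} (hb : b ∈ E) (hc : c ∈ E) (ha : a ^ 2 = b * a + c) (hσa : σ a ≠ a)
    (hy : y ∈ E ⊔ K⟮a⟯) (hσy : σ y = y) : y ∈ E := by
  obtain ⟨u, hu, v, hv, rfl⟩ := exists_eq_add_mul_of_mem_sup_adjoin_simple hb hc ha hy
  rw [E.mem_fixingSubgroup_iff] at hσ
  have hv0 : v * (σ a - a) = 0 := by
    rw [map_add, map_mul, hσ u hu, hσ v hv] at hσy
    linear_combination hσy
  obtain rfl : v = 0 := by simpa [sub_ne_zero.2 hσa] using hv0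
  simpa using hu

theorem mem_fixingSubgroup_adjoin_iff {S : Set L} {σ : L ≃ₐ[K] L} :
    σ ∈ (adjoin K S).fixingSubgroup ↔ ∀ s ∈ S, σ s = s := by
  rw [IntermediateField.mem_fixingSubgroup_iff]
  exact forall_mem_adjoin_smul_eq_self_iff K σ

theorem fixedField_closure_range_eq_of_quadratic [Finite ι] {σ : ι → L ≃ₐ[K] L} {a : ι → L}
    (hE : ∀ i, σ i ∈ E.fixingSubgroup)
    (hquad : ∀ i, ∃ b ∈ E, ∃ c ∈ E, a i ^ 2 = b * a i + c)
    (hmove : ∀ i, σ i (a i) ≠ a i) (hfix : ∀ i j, i ≠ j → σ i (a j) = a j)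
    (htop : E ⊔ adjoin K (Set.range a) = ⊤) :
    fixedField (Subgroup.closure (Set.range σ)) = E := by
  refine le_antisymm (fun y hy ↦ ?_) ?_
  · have hσy (i : ι) : σ i y = y :=
      (mem_fixedField_iff _ y).1 hy _ (Subgroup.subset_closure ⟨i, rfl⟩)
    have descend (s : Set ι) (hs : s.Finite) : y ∈ E ⊔ adjoin K (a '' s) → y ∈ E := by
      induction s, hs using Set.Finite.induction_on with
      | empty => simp
      | @insert i s his _ ih =>
        intro hmem
        obtain ⟨b, hb, c, hc, habc⟩ := hquad i
        have hfixF : σ i ∈ (E ⊔ adjoin K (a '' s)).fixingSubgroup := by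
          rw [fixingSubgroup_sup, Subgroup.mem_inf, mem_fixingSubgroup_adjoin_iff,
            Set.forall_mem_image]
          exact ⟨hE i, fun j hj ↦ hfix i j (ne_of_mem_of_not_mem hj his).symm⟩
        rw [Set.image_insert_eq, Set.insert_eq, adjoin_union, sup_comm K⟮a i⟯,
          ← sup_assoc] at hmem
        exact ih (mem_of_mem_sup_adjoin_simple_of_fixed hfixF (le_sup_left (a := E) hb)
          (le_sup_left (a := E) hc) habc (hmove i) hmem (hσy i))
    exact descend Set.univ Set.finite_univ (by simp [htop])
  · rw [le_iff_le, Subgroup.closure_le]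
    exact Set.range_subset_iff.2 hE

end Galois

section CharTwo

variable {R ι : Type*} [CommSemiring R] [CharP R 2] [DecidableEq ι]

theorem sum_mul_filter_subset_symmDiff_eq_zero (x : Finset ι → R) (T : Finset (Finset ι))
    {S : Finset ι} (hS : S.Nonempty) : ∑ A ∈ T, ∑ B ∈ T with S ⊆ A ∆ B, x A * x B = 0 := by
  rw [Finset.sum_sigma']
  refine Finset.sum_involution (fun p _ ↦ ⟨p.2, p.1⟩) ?_ ?_ ?_ ?_
  · simp [mul_comm, CharTwo.add_self_eq_zero]
  · rintro ⟨A, B⟩ hAB - hBA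
    obtain rfl : B = A := congrArg Sigma.fst hBA
    simp [symmDiff_self, hS.ne_empty] at hAB
  · rintro ⟨A, B⟩
    simp +contextual [symmDiff_comm A B]
  · simp

theorem sum_powerset_ite_subset_and_sdiff_subset (A B S : Finset ι) :
    ∑ U ∈ S.powerset, (if U ⊆ A ∧ S \ U ⊆ B then 1 else 0 : R) =
      if S ⊆ A ∆ B then 1 else 0 := by
  calc ∑ U ∈ S.powerset, (if U ⊆ A ∧ S \ U ⊆ B then 1 else 0 : R)
    _ = ∑ U ∈ S.powerset, (∏ i ∈ U, if i ∈ A then 1 else 0) *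
        ∏ i ∈ S \ U, if i ∈ B then 1 else 0 := by
      simp [Finset.prod_boole, ← ite_and, Finset.subset_iff, and_comm]
    _ = ∏ i ∈ S, ((if i ∈ A then 1 else 0) + if i ∈ B then 1 else 0 : R) :=
      (Finset.prod_add _ _ _).symm
    _ = ∏ i ∈ S, if i ∈ A ∆ B then 1 else 0 := by
      refine Finset.prod_congr rfl fun i _ ↦ ?_
      by_cases hA : i ∈ A <;> by_cases hB : i ∈ B <;>
        simp [hA, hB, Finset.mem_symmDiff, CharTwo.add_self_eq_zero]
    _ = if S ⊆ A ∆ B then 1 else 0 := by simp [Finset.prod_boole, Finset.subset_iff]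

end CharTwo

section PairSums

variable {R ι : Type*} [CommSemiring R] [Fintype ι] [DecidableEq ι]

/-- The sum `c_S = ∑_{A ⊇ S} x_A`. Passing from `x` to `c` is a unitriangular change of variables,
and the translation `A ↦ A ∆ {k}` fixes each `c_S` with `k ∉ S`. -/
def supersetSum (x : Finset ι → R) (S : Finset ι) : R := ∑ A with S ⊆ A, x A

/-- The quadratic invariant `w_h = ∑ x_A x_B`, summed over the unordered pairs `{A, B}` with
`A ∆ B = h`. For `h = ∅` these are the pairs `{A, A}`, so `w_∅ = ∑ x_A ^ 2`. -/
def pairSum (x : Finset ι → R) (h : Finset ι) : R :=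
  ∑ p : Sym2 (Finset ι) with Sym2.lift ⟨(· ∆ ·), symmDiff_comm⟩ p = h, (p.map x).mul

theorem pairSum_eq_sum_notMem (x : Finset ι → R) {h : Finset ι} {k : ι} (hk : k ∈ h) :
    pairSum x h = ∑ A with k ∉ A, x A * x (A ∆ h) := by
  symm
  refine Finset.sum_nbij (fun A ↦ s(A, A ∆ h)) (by simp) ?_ ?_ (by simp [Sym2.mul])
  · intro A hA B hB hAB
    rcases Sym2.eq_iff.1 hAB with ⟨hAB, -⟩ | ⟨rfl, -⟩
    · exact hAB
    · simp_all [Finset.mem_symmDiff]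
  · intro p hp
    induction p with | _ A B
    obtain rfl : A ∆ B = h := by simpa using hp
    rcases Finset.mem_symmDiff.1 hk with ⟨-, hB⟩ | ⟨-, hA⟩
    · exact ⟨B, by simpa using hB, by simp [symmDiff_comm A B, Sym2.eq_swap]⟩
    · exact ⟨A, by simpa using hA, by simp⟩

theorem pairSum_comp_symmDiff (x : Finset ι → R) (g h : Finset ι) :
    pairSum (fun A ↦ x (A ∆ g)) h = pairSum x h := by
  have hinv : Function.Involutive (Sym2.map (· ∆ g)) := fun p ↦ by
    induction p with | _ A B; simp
  refine Finset.sum_equiv hinv.toPerm (fun p ↦ ?_) (fun p _ ↦ ?_)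
  · induction p with | _ A B
    simp only [Finset.mem_filter_univ, Function.Involutive.coe_toPerm, Sym2.map_mk, Sym2.lift_mk,
      symmDiff_symmDiff_symmDiff_comm A g B g, symmDiff_self, symmDiff_bot]
  · induction p with | _ A B
    simp [Sym2.mul]

theorem map_pairSum {S : Type*} [CommSemiring S] (f : R →+* S) (x : Finset ι → R)
    (h : Finset ι) : f (pairSum x h) = pairSum (f ∘ x) h := by
  rw [pairSum, map_sum]
  refine Finset.sum_congr rfl fun p _ ↦ ?_
  induction p with | _ A B
  simp [Sym2.mul]

theorem supersetSum_empty (x : Finset ι → R) : supersetSum x ∅ = ∑ A, x A := by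
  simp [supersetSum]

theorem supersetSum_singleton (x : Finset ι → R) (k : ι) :
    supersetSum x {k} = ∑ A with k ∈ A, x A := by
  simp [supersetSum]

theorem supersetSum_pairSum_insert (x : Finset ι → R) (k : ι) (S : Finset ι) :
    supersetSum (pairSum x) (insert k S) =
      ∑ A with k ∈ A, ∑ B with k ∉ B ∧ S ⊆ A ∆ B, x A * x B := by
  calc supersetSum (pairSum x) (insert k S)
    _ = ∑ h with insert k S ⊆ h, ∑ B with k ∉ B, x B * x (B ∆ h) :=
      Finset.sum_congr rfl fun h hh ↦
        pairSum_eq_sum_notMem x ((Finset.mem_filter.1 hh).2 (Finset.mem_insert_self k S))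
    _ = ∑ B with k ∉ B, ∑ h with insert k S ⊆ h, x B * x (B ∆ h) := Finset.sum_comm
    _ = ∑ B with k ∉ B, ∑ A with insert k S ⊆ A ∆ B, x A * x B :=
      Finset.sum_congr rfl fun B _ ↦ Finset.sum_equiv (symmDiff_left_involutive B).toPerm
        (by simp) (by simp [mul_comm, symmDiff_comm B])
    _ = ∑ A with k ∈ A, ∑ B with k ∉ B ∧ S ⊆ A ∆ B, x A * x B := by
      refine Finset.sum_comm' fun B A ↦ ?_
      simp only [Finset.mem_filter_univ, Finset.insert_subset_iff, Finset.mem_symmDiff]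
      tauto

theorem supersetSum_singleton_sq_add (x : Finset ι → R) (k : ι) :
    supersetSum x {k} ^ 2 + supersetSum (pairSum x) {k} = (∑ A, x A) * supersetSum x {k} := by
  have hpair : supersetSum (pairSum x) {k} = supersetSum x {k} * ∑ B with k ∉ B, x B := by
    simpa [supersetSum_singleton, Finset.sum_mul_sum] using supersetSum_pairSum_insert x k ∅
  have hsum : ∑ A, x A = supersetSum x {k} + ∑ B with k ∉ B, x B := by
    rw [supersetSum_singleton, Finset.sum_filter_add_sum_filter_not]
  rw [hpair, hsum]
  ring

theorem supersetSum_singleton_add_comp_symmDiff (x : Finset ι → R) (k : ι) :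
    supersetSum x {k} + supersetSum (fun A ↦ x (A ∆ {k})) {k} = ∑ A, x A := by
  rw [supersetSum_singleton, supersetSum_singleton,
    ← Finset.sum_filter_add_sum_filter_not Finset.univ (k ∈ ·)]
  congr 1
  exact Finset.sum_equiv (symmDiff_left_involutive {k}).toPerm
    (by simp [Finset.mem_symmDiff]) (by simp)

theorem supersetSum_comp_symmDiff_of_disjoint (x : Finset ι → R) {S T : Finset ι}
    (hST : Disjoint S T) : supersetSum (fun A ↦ x (A ∆ T)) S = supersetSum x S := by
  refine Finset.sum_equiv (symmDiff_left_involutive T).toPerm (fun A ↦ ?_) (by simp)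
  simp only [Finset.mem_filter_univ, Function.Involutive.coe_toPerm, Finset.subset_iff,
    Finset.mem_symmDiff]
  refine forall₂_congr fun i hi ↦ ?_
  simp [Finset.disjoint_left.1 hST hi]

-- Modulo `2`, the number of `U ⊆ S` with `U ⊆ A` and `S \ U ⊆ B` is `1` if `S ⊆ A ∆ B` and `0`
-- otherwise; the products `x A * x B` with `k ∈ A ∩ B` cancel in pairs `(A, B)`, `(B, A)`.
theorem sum_powerset_supersetSum_mul [CharP R 2] (x : Finset ι → R) {k : ι} {S : Finset ι}
    (hS : S.Nonempty) :
    ∑ U ∈ S.powerset, supersetSum x (insert k U) * supersetSum x (S \ U) =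
      supersetSum (pairSum x) (insert k S) := by
  calc ∑ U ∈ S.powerset, supersetSum x (insert k U) * supersetSum x (S \ U)
    _ = ∑ U ∈ S.powerset, ∑ A with k ∈ A, ∑ B,
        (if U ⊆ A ∧ S \ U ⊆ B then 1 else 0) * (x A * x B) := by
      refine Finset.sum_congr rfl fun U _ ↦ ?_
      simp only [supersetSum, Finset.sum_mul_sum, Finset.insert_subset_iff]
      rw [← Finset.filter_filter, Finset.sum_filter]
      refine Finset.sum_congr rfl fun A _ ↦ ?_
      by_cases hA : U ⊆ A <;> simp [hA, Finset.sum_filter]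
    _ = ∑ A with k ∈ A, ∑ B, ∑ U ∈ S.powerset,
        (if U ⊆ A ∧ S \ U ⊆ B then 1 else 0) * (x A * x B) := by
      rw [Finset.sum_comm]
      exact Finset.sum_congr rfl fun A _ ↦ Finset.sum_comm
    _ = ∑ A with k ∈ A, ∑ B with S ⊆ A ∆ B, x A * x B := by
      simp_rw [← Finset.sum_mul, sum_powerset_ite_subset_and_sdiff_subset, boole_mul,
        ← Finset.sum_filter]
    _ = ∑ A with k ∈ A, ∑ B with k ∈ B ∧ S ⊆ A ∆ B, x A * x B +
        ∑ A with k ∈ A, ∑ B with k ∉ B ∧ S ⊆ A ∆ B, x A * x B := by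
      rw [← Finset.sum_add_distrib]
      refine Finset.sum_congr rfl fun A _ ↦ ?_
      rw [← Finset.sum_filter_add_sum_filter_not _ (k ∈ ·), Finset.filter_filter,
        Finset.filter_filter]
      simp only [and_comm]
    _ = supersetSum (pairSum x) (insert k S) := by
      simp only [← Finset.filter_filter (k ∈ ·)]
      rw [sum_mul_filter_subset_symmDiff_eq_zero x _ hS, zero_add, supersetSum_pairSum_insert]

end PairSums

section FixedField

variable {K L ι : Type*} [Field K] [Field L] [Algebra K L] [Fintype ι] [DecidableEq ι]
  {E : IntermediateField K L} {x : Finset ι → L}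

theorem supersetSum_mem_of_pairSum_mem [CharP L 2] (hne : ∑ A, x A ≠ 0) (hsum : ∑ A, x A ∈ E)
    (hpair : ∀ h : Finset ι, h.Nonempty → pairSum x h ∈ E)
    (hsingle : ∀ k, supersetSum x {k} ∈ E) (S : Finset ι) : supersetSum x S ∈ E := by
  induction S using Finset.strongInduction with | _ S ih
  rcases S.eq_empty_or_nonempty with rfl | ⟨k, hk⟩
  · rwa [supersetSum_empty]
  obtain ⟨S, hkS, rfl⟩ : ∃ S', k ∉ S' ∧ S = insert k S' :=
    ⟨S.erase k, Finset.notMem_erase k S, (Finset.insert_erase hk).symm⟩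
  rcases S.eq_empty_or_nonempty with rfl | hS
  · simpa using hsingle k
  have hsplit := sum_powerset_supersetSum_mul x (k := k) hS
  rw [← Finset.add_sum_erase _ _ (Finset.mem_powerset_self S), Finset.sdiff_self,
    supersetSum_empty, ← eq_sub_iff_add_eq] at hsplit
  have hpairs : supersetSum (pairSum x) (insert k S) ∈ E := sum_mem fun h hh ↦
    hpair h ⟨k, (Finset.mem_filter.1 hh).2 (Finset.mem_insert_self k S)⟩
  have hproducts : ∑ U ∈ S.powerset.erase S,
      supersetSum x (insert k U) * supersetSum x (S \ U) ∈ E := by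
    refine sum_mem fun U hU ↦ mul_mem (ih _ ?_) (ih _ ?_)
    · obtain ⟨hne, hUS⟩ := Finset.mem_erase.1 hU
      have hss := (Finset.mem_powerset.1 hUS).ssubset_of_ne hne
      exact ⟨Finset.insert_subset_insert k hss.1, fun hSU ↦ hss.2 <|
        (Finset.insert_subset_insert_iff hkS).1 hSU⟩
    · exact Finset.sdiff_subset.trans_ssubset (Finset.ssubset_insert hkS)
  rw [eq_div_of_mul_eq hne hsplit]
  exact div_mem (sub_mem hpairs hproducts) hsum

theorem mem_of_forall_supersetSum_mem (hx : ∀ S, supersetSum x S ∈ E) (A : Finset ι) :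
    x A ∈ E := by
  induction A using WellFoundedGT.induction with | _ A ih
  have hA : supersetSum x A = x A + ∑ B ∈ Finset.erase {B | A ⊆ B} A, x B :=
    (Finset.add_sum_erase _ _ (by simp)).symm
  rw [← sub_eq_of_eq_add hA]
  refine sub_mem (hx A) (sum_mem fun B hB ↦ ih B ?_)
  obtain ⟨hne, hAB⟩ := Finset.mem_erase.1 hB
  exact (Finset.mem_filter.1 hAB).2.lt_of_ne' hne

theorem fixedField_closure_range_eq_adjoin_pairSum [CharP L 2] {σ : ι → L ≃ₐ[K] L}
    (htop : adjoin K (Set.range x) = ⊤) (hne : ∑ A, x A ≠ 0)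
    (hσ : ∀ k A, σ k (x A) = x (A ∆ {k})) :
    fixedField (Subgroup.closure (Set.range σ)) =
      adjoin K (insert (∑ A, x A) (pairSum x '' {h | h.Nonempty})) := by
  set E := adjoin K (insert (∑ A, x A) (pairSum x '' {h | h.Nonempty}))
  have hsum : ∑ A, x A ∈ E := subset_adjoin K _ (Set.mem_insert _ _)
  have hpair (h : Finset ι) (hh : h.Nonempty) : pairSum x h ∈ E :=
    subset_adjoin K _ (.inr ⟨h, hh, rfl⟩)
  have hσx (k : ι) : σ k ∘ x = fun A ↦ x (A ∆ {k}) := funext (hσ k)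
  have hσsuperset (k : ι) (S : Finset ι) :
      σ k (supersetSum x S) = supersetSum (fun A ↦ x (A ∆ {k})) S := by
    rw [← hσx, supersetSum, map_sum]
    rfl
  refine fixedField_closure_range_eq_of_quadratic (a := fun k ↦ supersetSum x {k})
    (fun k ↦ ?_) (fun k ↦ ?_) (fun k ↦ ?_) (fun k j hkj ↦ ?_) ?_
  · rw [mem_fixingSubgroup_adjoin_iff, Set.forall_mem_insert, Set.forall_mem_image]
    refine ⟨?_, fun h _ ↦ ?_⟩
    · rw [← supersetSum_empty, hσsuperset,
        supersetSum_comp_symmDiff_of_disjoint x (Finset.disjoint_empty_left _)]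
    · exact (map_pairSum (σ k : L →+* L) x h).trans
        ((congrArg (pairSum · h) (hσx k)).trans (pairSum_comp_symmDiff x {k} h))
  · refine ⟨_, hsum, -supersetSum (pairSum x) {k}, neg_mem (sum_mem fun h hh ↦ ?_), ?_⟩
    · exact hpair h ⟨k, by simpa using hh⟩
    · linear_combination supersetSum_singleton_sq_add x k
  · intro hfixed
    rw [hσsuperset] at hfixed
    exact hne (by rw [← supersetSum_singleton_add_comp_symmDiff x k, hfixed,
      CharTwo.add_self_eq_zero])
  · rw [hσsuperset, supersetSum_comp_symmDiff_of_disjoint x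
      (Finset.disjoint_singleton.2 hkj.symm)]
  · rw [eq_top_iff, ← htop, adjoin_le_iff, Set.range_subset_iff]
    exact mem_of_forall_supersetSum_mem <|
      supersetSum_mem_of_pairSum_mem hne (le_sup_left (a := E) hsum)
        (fun h hh ↦ le_sup_left (a := E) (hpair h hh))
        (fun k ↦ le_sup_right (a := E) (subset_adjoin K _ ⟨k, rfl⟩))

end FixedField

section RationalFunctions

variable {K I : Type} [Field K]

theorem permHom_Xvar (s : Equiv.Perm I) (i : I) :
    permHom K I s (Xvar K I i) = Xvar K I (s i) := by
  simp [permHom, Xvar, renameHom]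

theorem adjoin_range_Xvar : adjoin K (Set.range (Xvar K I)) = ⊤ := by
  have hpoly : (IsScalarTower.toAlgHom K (MvPolynomial I K) (RFF K I)).range ≤
      (adjoin K (Set.range (Xvar K I))).toSubalgebra := by
    rw [← Algebra.map_top, ← MvPolynomial.adjoin_range_X, AlgHom.map_adjoin, ← Set.range_comp]
    exact algebra_adjoin_le_adjoin K _
  rw [eq_top_iff]
  intro y _
  obtain ⟨p, q, -, rfl⟩ := IsFractionRing.div_surjective (A := MvPolynomial I K) y
  exact div_mem (hpoly ⟨p, rfl⟩) (hpoly ⟨q, rfl⟩)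

theorem sum_Xvar_ne_zero [Fintype I] [Nonempty I] : ∑ i, Xvar K I i ≠ 0 := by
  classical
  simp only [Xvar, ← map_sum]
  rw [ne_eq, FaithfulSMul.algebraMap_eq_zero_iff]
  intro h
  simpa using congrArg (MvPolynomial.eval (Pi.single (Classical.arbitrary I) (1 : K))) h

end RationalFunctions

theorem fixedField_V8_char_two_general {K I ι : Type} [Field K] [CharP K 2] [Fintype I]
    [Fintype ι] [DecidableEq ι] (e : Finset ι ≃ I) {s : ι → Equiv.Perm I}
    (hs : ∀ k A, s k (e A) = e (A ∆ {k})) :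
    fixedSub K I (Subgroup.closure (Set.range s)) =
      adjoin K (insert (∑ i, Xvar K I i) (pairSum (Xvar K I ∘ e) '' {h | h.Nonempty})) := by
  have : CharP (RFF K I) 2 := charP_of_injective_algebraMap (algebraMap K (RFF K I)).injective 2
  have : Nonempty I := e.symm.nonempty
  have hgen : adjoin K (Set.range (Xvar K I ∘ e)) = ⊤ := by
    rw [e.surjective.range_comp, adjoin_range_Xvar]
  have hsum : ∑ A, (Xvar K I ∘ e) A = ∑ i, Xvar K I i := e.sum_comp _
  rw [fixedSub, MonoidHom.map_closure, ← Set.range_comp, ← hsum]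
  refine fixedField_closure_range_eq_adjoin_pairSum hgen (hsum ▸ sum_Xvar_ne_zero) fun k A ↦ ?_
  simp only [Function.comp_apply, permHom_Xvar, hs]

section RankThree

/-- Subsets of `Fin 3`, the indices of the elements of `V₈`, numbered by reading them as sets of
binary digits; with this numbering translation by `{0}`, `{1}`, `{2}` gives the three generators
of `V₈`. -/
def binaryEquiv : Finset (Fin 3) ≃ Fin 8 :=
  .ofBijective (fun A ↦ ∑ k ∈ A, 2 ^ (k : ℕ)) (by decide)

/-- The generators of `V₈ ⊂ S₈`. -/
def v8Generator : Fin 3 → Equiv.Perm (Fin 8) :=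
  ![Equiv.swap (0 : Fin 8) 1 * Equiv.swap 2 3 * Equiv.swap 4 5 * Equiv.swap 6 7,
    Equiv.swap (0 : Fin 8) 2 * Equiv.swap 1 3 * Equiv.swap 4 6 * Equiv.swap 5 7,
    Equiv.swap (0 : Fin 8) 4 * Equiv.swap 1 5 * Equiv.swap 2 6 * Equiv.swap 3 7]

theorem v8Generator_binaryEquiv (k : Fin 3) (A : Finset (Fin 3)) :
    v8Generator k (binaryEquiv A) = binaryEquiv (A ∆ {k}) := by
  decide +revert

theorem range_v8Generator :
    Set.range v8Generator =
      {Equiv.swap (0 : Fin 8) 1 * Equiv.swap 2 3 * Equiv.swap 4 5 * Equiv.swap 6 7,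
        Equiv.swap (0 : Fin 8) 2 * Equiv.swap 1 3 * Equiv.swap 4 6 * Equiv.swap 5 7,
        Equiv.swap (0 : Fin 8) 4 * Equiv.swap 1 5 * Equiv.swap 2 6 * Equiv.swap 3 7} := by
  simp only [v8Generator, Matrix.range_cons, Matrix.range_empty, Set.union_empty,
    Set.singleton_union]

theorem pairSum_comp_binaryEquiv_image_nonempty {R : Type*} [CommSemiring R] (y : Fin 8 → R) :
    pairSum (y ∘ binaryEquiv) '' {h | h.Nonempty} =
      {y 0 * y 1 + y 2 * y 3 + y 4 * y 5 + y 6 * y 7,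
        y 0 * y 2 + y 1 * y 3 + y 4 * y 6 + y 5 * y 7,
        y 0 * y 3 + y 1 * y 2 + y 4 * y 7 + y 5 * y 6,
        y 0 * y 4 + y 1 * y 5 + y 2 * y 6 + y 3 * y 7,
        y 0 * y 5 + y 1 * y 4 + y 2 * y 7 + y 3 * y 6,
        y 0 * y 6 + y 1 * y 7 + y 2 * y 4 + y 3 * y 5,
        y 0 * y 7 + y 1 * y 6 + y 2 * y 5 + y 3 * y 4} := by
  have hnonempty : {h : Finset (Fin 3) | h.Nonempty} =
      {{0}, {1}, {0, 1}, {2}, {0, 2}, {1, 2}, {0, 1, 2}} := by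
    ext h
    decide +revert
  have h0 : ({A | 0 ∉ A} : Finset (Finset (Fin 3))) = {∅, {1}, {2}, {1, 2}} := by decide
  have h1 : ({A | 1 ∉ A} : Finset (Finset (Fin 3))) = {∅, {0}, {2}, {0, 2}} := by decide
  have h2 : ({A | 2 ∉ A} : Finset (Finset (Fin 3))) = {∅, {0}, {1}, {0, 1}} := by decide
  rw [hnonempty]
  simp only [Set.image_insert_eq, Set.image_singleton]
  rw [pairSum_eq_sum_notMem (k := 0) (h := {0}) _ (by decide), h0,
    pairSum_eq_sum_notMem (k := 1) (h := {1}) _ (by decide),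
    pairSum_eq_sum_notMem (k := 1) (h := {0, 1}) _ (by decide), h1,
    pairSum_eq_sum_notMem (k := 2) (h := {2}) _ (by decide),
    pairSum_eq_sum_notMem (k := 2) (h := {0, 2}) _ (by decide),
    pairSum_eq_sum_notMem (k := 2) (h := {1, 2}) _ (by decide),
    pairSum_eq_sum_notMem (k := 2) (h := {0, 1, 2}) _ (by decide), h2]
  simp (disch := decide) only [Finset.sum_insert, Finset.sum_singleton, ← add_assoc]
  rfl

end RankThree

set_option maxHeartbeats 1000000 in
/-- **Generators of the fixed field of the elementary abelian group `V₈` in characteristic 2.**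
Let `K` be a field of characteristic 2 and `V₈ ⊂ S₈` the elementary abelian group of order 8
generated by `(1,2)(3,4)(5,6)(7,8)`, `(1,3)(2,4)(5,7)(6,8)` and `(1,5)(2,6)(3,7)(4,8)`
(indices written `0,…,7`), acting on `K(x₁,…,x₈)` by permuting the variables. Then
`K(x₁,…,x₈)^{V₈}` is generated over `K` by `w₁ = x₁+⋯+x₈`, `w₂ = x₁x₂+x₃x₄+x₅x₆+x₇x₈`,
`w₃ = x₁x₃+x₂x₄+x₅x₇+x₆x₈`, `w₄ = x₁x₄+x₂x₃+x₅x₈+x₆x₇`, `w₅ = x₁x₅+x₂x₆+x₃x₇+x₄x₈`,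
`w₆ = x₁x₆+x₂x₅+x₃x₈+x₄x₇`, `w₇ = x₁x₇+x₂x₈+x₃x₅+x₄x₆` and `w₈ = x₁x₈+x₂x₇+x₃x₆+x₄x₅`. -/
theorem fixedField_V8_char_two (K : Type) [Field K] [CharP K 2] :
    fixedSub K (Fin 8) (Subgroup.closure
        {Equiv.swap (0 : Fin 8) 1 * Equiv.swap 2 3 * Equiv.swap 4 5 * Equiv.swap 6 7,
         Equiv.swap (0 : Fin 8) 2 * Equiv.swap 1 3 * Equiv.swap 4 6 * Equiv.swap 5 7,
         Equiv.swap (0 : Fin 8) 4 * Equiv.swap 1 5 * Equiv.swap 2 6 * Equiv.swap 3 7}) =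
      IntermediateField.adjoin K
        {Xvar K (Fin 8) 0 + Xvar K (Fin 8) 1 + Xvar K (Fin 8) 2 + Xvar K (Fin 8) 3 +
           Xvar K (Fin 8) 4 + Xvar K (Fin 8) 5 + Xvar K (Fin 8) 6 + Xvar K (Fin 8) 7,
         Xvar K (Fin 8) 0 * Xvar K (Fin 8) 1 + Xvar K (Fin 8) 2 * Xvar K (Fin 8) 3 +
           Xvar K (Fin 8) 4 * Xvar K (Fin 8) 5 + Xvar K (Fin 8) 6 * Xvar K (Fin 8) 7,
         Xvar K (Fin 8) 0 * Xvar K (Fin 8) 2 + Xvar K (Fin 8) 1 * Xvar K (Fin 8) 3 +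
           Xvar K (Fin 8) 4 * Xvar K (Fin 8) 6 + Xvar K (Fin 8) 5 * Xvar K (Fin 8) 7,
         Xvar K (Fin 8) 0 * Xvar K (Fin 8) 3 + Xvar K (Fin 8) 1 * Xvar K (Fin 8) 2 +
           Xvar K (Fin 8) 4 * Xvar K (Fin 8) 7 + Xvar K (Fin 8) 5 * Xvar K (Fin 8) 6,
         Xvar K (Fin 8) 0 * Xvar K (Fin 8) 4 + Xvar K (Fin 8) 1 * Xvar K (Fin 8) 5 +
           Xvar K (Fin 8) 2 * Xvar K (Fin 8) 6 + Xvar K (Fin 8) 3 * Xvar K (Fin 8) 7,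
         Xvar K (Fin 8) 0 * Xvar K (Fin 8) 5 + Xvar K (Fin 8) 1 * Xvar K (Fin 8) 4 +
           Xvar K (Fin 8) 2 * Xvar K (Fin 8) 7 + Xvar K (Fin 8) 3 * Xvar K (Fin 8) 6,
         Xvar K (Fin 8) 0 * Xvar K (Fin 8) 6 + Xvar K (Fin 8) 1 * Xvar K (Fin 8) 7 +
           Xvar K (Fin 8) 2 * Xvar K (Fin 8) 4 + Xvar K (Fin 8) 3 * Xvar K (Fin 8) 5,
         Xvar K (Fin 8) 0 * Xvar K (Fin 8) 7 + Xvar K (Fin 8) 1 * Xvar K (Fin 8) 6 +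
           Xvar K (Fin 8) 2 * Xvar K (Fin 8) 5 + Xvar K (Fin 8) 3 * Xvar K (Fin 8) 4} := by
  rw [← range_v8Generator, ← Fin.sum_univ_eight, ← pairSum_comp_binaryEquiv_image_nonempty]
  exact fixedField_V8_char_two_general binaryEquiv v8Generator_binaryEquiv
end
end

section
/- Let K(x_1,…,x_n) be the rational function field over a field K, and let f_i = Π_{k=1}^n x_k^{a_{ik}} for 1 ≤ i ≤ n be Laurent monomials with integer exponents a_{ik}. If the determinant D of the matrix (a_{ik}) is nonzero, then K(x_1,…,x_n) is a finite extension of K(f_1,…,f_n) of degree exactly |D|. -/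
noncomputable section

/-!
Distinct Laurent monomials are linearly independent over `K`, so the exponent group `ℤⁿ` embeds in
`K(x₁, …, xₙ)ˣ` as a linearly independent family `χ`, and `K(f₁, …, fₙ)` is generated by the
restriction of `χ` to the row lattice `H` of the matrix. The algebra `K[χ(H)]` is the span of
`χ(H)`, and its translates by coset representatives of `H` are spans of disjoint sets of monomials;
hence the representatives are linearly independent over `K[χ(H)]`, and over its fraction field
`K(χ(H))` after clearing denominators. They span because every `χ(g)` has a power in `χ(H)`, so that
the field and the algebra generated by the monomials over `K(χ(H))` coincide. The degree is thus the
index of the row lattice, which is the absolute value of the determinant.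
-/

section CosetBasis

open IntermediateField Submodule

theorem iSupIndep_span_image_of_linearIndependent {R M ι κ : Type*} [Ring R] [AddCommGroup M]
    [Module R M] {v : ι → M} (hv : LinearIndependent R v) {s : κ → Set ι}
    (hs : Pairwise (Function.onFun Disjoint s)) : iSupIndep fun k => span R (v '' s k) := by
  intro k
  simp only [← span_iUnion, ← Set.image_iUnion]
  refine hv.disjoint_span_image ?_
  simp only [Set.disjoint_iUnion_right]
  exact fun j hjk => hs hjk.symm

theorem toSubmodule_adjoin_image_submonoid {R A M : Type*} [CommSemiring R] [Semiring A]
    [Algebra R A] [Monoid M] (χ : M →* A) (S : Submonoid M) :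
    Subalgebra.toSubmodule (Algebra.adjoin R (χ '' S)) = span R (χ '' S) := by
  rw [Algebra.adjoin_eq_span, ← Submonoid.coe_map, Submonoid.closure_eq]

variable {K L G : Type*} [Field K] [Field L] [Algebra K L] [Group G]

theorem adjoin_image_subgroup_closure (χ : G →* L) (S : Set G) :
    adjoin K (χ '' Subgroup.closure S) = adjoin K (χ '' S) := by
  refine le_antisymm (adjoin_le_iff.2 ?_)
    (adjoin.mono K _ _ (Set.image_mono Subgroup.subset_closure))
  rintro _ ⟨g, hg, rfl⟩
  rw [SetLike.mem_coe]
  induction hg using Subgroup.closure_induction with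
  | mem g hg => exact subset_adjoin K _ (Set.mem_image_of_mem χ hg)
  | one => simp only [map_one, one_mem]
  | mul g h _ _ hg hh => simpa only [map_mul] using mul_mem hg hh
  | inv g _ hg => simpa only [map_inv₀, map_inv] using inv_mem hg

variable {χ : G →* L} {H : Subgroup G}

theorem mul_mem_span_image_coset {z : L} (hz : z ∈ Algebra.adjoin K (χ '' H)) (c : G ⧸ H) :
    z * χ c.out ∈ span K (χ '' (QuotientGroup.mk ⁻¹' {c})) := by
  rw [← Subalgebra.mem_toSubmodule] at hz
  rw [show (H : Set G) = H.toSubmonoid from rfl, toSubmodule_adjoin_image_submonoid] at hz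
  induction hz using span_induction with
  | mem _ hx =>
    obtain ⟨h, hh, rfl⟩ := hx
    refine subset_span ⟨c.out * h, ?_, by rw [map_mul, mul_comm]⟩
    rw [Set.mem_preimage, Set.mem_singleton_iff, QuotientGroup.mk_mul_of_mem _ hh]
    exact c.out_eq
  | zero => simp only [zero_mul, zero_mem]
  | add x y _ _ hx hy => simpa only [add_mul] using add_mem hx hy
  | smul k x _ hx => simpa only [smul_mul_assoc] using smul_mem _ k hx

open scoped IntermediateField.algebraAdjoinAdjoin in
theorem linearIndependent_map_quotient_out (hχ : LinearIndependent K χ) (H : Subgroup G) :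
    LinearIndependent (adjoin K (χ '' H)) fun c : G ⧸ H => χ c.out := by
  rw [← LinearIndependent.iff_fractionRing (Algebra.adjoin K (χ '' H)), linearIndependent_iff']
  intro s g hsum c hc
  have hcosets := iSupIndep_span_image_of_linearIndependent hχ
    (pairwise_disjoint_fiber (QuotientGroup.mk : G → G ⧸ H))
  have hzero : (g c : L) * χ c.out = 0 :=
    (iSupIndep_iff_finsetSum_eq_zero_imp_eq_zero _).1 hcosets s (fun c => (g c : L) * χ c.out)
      (fun c _ => mul_mem_span_image_coset (g c).2 c) hsum c hc
  exact Subtype.ext ((mul_eq_zero_iff_right (hχ.ne_zero c.out)).1 hzero)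

theorem map_mem_span_range_map_quotient_out (χ : G →* L) (H : Subgroup G) (g : G) :
    χ g ∈ span (adjoin K (χ '' H)) (Set.range fun c : G ⧸ H => χ c.out) := by
  obtain ⟨h, hout⟩ := QuotientGroup.mk_out_eq_mul H g
  have hmem : χ (h : G)⁻¹ ∈ adjoin K (χ '' H) :=
    subset_adjoin K _ ⟨_, inv_mem h.2, rfl⟩
  have hg : χ g = (⟨_, hmem⟩ : adjoin K (χ '' H)) • χ (g : G ⧸ H).out := by
    rw [IntermediateField.smul_def, smul_eq_mul, mul_comm, ← map_mul, hout, mul_inv_cancel_right]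
  rw [hg]
  exact smul_mem _ _ (subset_span ⟨_, rfl⟩)

theorem isAlgebraic_map_of_finiteIndex (χ : G →* L) (H : Subgroup G) [H.FiniteIndex] (g : G) :
    IsAlgebraic (adjoin K (χ '' H)) (χ g) := by
  obtain ⟨n, hn, -, hgn⟩ :=
    Subgroup.exists_pow_mem_of_index_ne_zero (H := H) Subgroup.FiniteIndex.index_ne_zero g
  have hpow : χ g ^ n ∈ adjoin K (χ '' H) := subset_adjoin K _ ⟨_, hgn, map_pow χ _ _⟩
  exact .of_pow hn (isAlgebraic_algebraMap (⟨_, hpow⟩ : adjoin K (χ '' H)))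

theorem span_range_map_quotient_out_eq_top (hgen : adjoin K (Set.range χ) = ⊤) (H : Subgroup G)
    [H.FiniteIndex] :
    span (adjoin K (χ '' H)) (Set.range fun c : G ⧸ H => χ c.out) = ⊤ := by
  have hadjoin : Algebra.adjoin (adjoin K (χ '' H)) (Set.range χ) = ⊤ :=
    (adjoin_eq_top_iff_of_isAlgebraic
      (Set.forall_mem_range.2 (isAlgebraic_map_of_finiteIndex χ H))).1
      (adjoin_eq_top_of_adjoin_eq_top K hgen)
  have hspan : span (adjoin K (χ '' H)) (Set.range χ) = ⊤ := by
    simpa only [Submonoid.coe_top, Set.image_univ, hadjoin, Algebra.top_toSubmodule] using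
      (toSubmodule_adjoin_image_submonoid (R := adjoin K (χ '' H)) χ ⊤).symm
  rw [eq_top_iff, ← hspan, span_le, Set.range_subset_iff]
  exact map_mem_span_range_map_quotient_out χ H

theorem finiteDimensional_and_finrank_adjoin_image_eq_index (hχ : LinearIndependent K χ)
    (hgen : adjoin K (Set.range χ) = ⊤) (H : Subgroup G) [H.FiniteIndex] :
    FiniteDimensional (adjoin K (χ '' H)) L ∧
      Module.finrank (adjoin K (χ '' H)) L = H.index := by
  let b := Module.Basis.mk (linearIndependent_map_quotient_out hχ H)
    (span_range_map_quotient_out_eq_top hgen H).ge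
  exact ⟨Module.Finite.of_basis b, Module.finrank_eq_nat_card_basis b⟩

end CosetBasis

theorem index_closure_range_ofAdd_row {ι : Type*} [Fintype ι] [DecidableEq ι]
    {a : Matrix ι ι ℤ} (ha : a.det ≠ 0) :
    (Subgroup.closure (Set.range fun i => Multiplicative.ofAdd (a i))).index = a.det.natAbs := by
  let b := Module.Basis.span (Matrix.linearIndependent_rows_of_det_ne_zero ha)
  have hb : Matrix.of (Subtype.val ∘ b) = a :=
    funext fun i => congrArg Subtype.val (Module.Basis.span_apply _ i)
  calc (Subgroup.closure (Set.range fun i => Multiplicative.ofAdd (a i))).index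
      = (AddSubgroup.closure (Set.range a.row)).index := by
        rw [← AddSubgroup.index_toSubgroup, AddSubgroup.toSubgroup_closure]
        rfl
    _ = (Submodule.span ℤ (Set.range a.row)).toAddSubgroup.index := by
        rw [Submodule.span_int_eq_addSubgroupClosure]
    _ = ((Pi.basisFun ℤ ι).det (Subtype.val ∘ b)).natAbs :=
        (Submodule.natAbs_det_basis_change (Pi.basisFun ℤ ι) _ b).symm
    _ = a.det.natAbs := by rw [Pi.basisFun_det_apply, hb]

theorem linearIndependent_prod_pow {R A ι : Type*} [CommRing R] [CommRing A] [Algebra R A]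
    [Fintype ι] {x : ι → A} (hx : AlgebraicIndependent R x) :
    LinearIndependent R fun m : ι →₀ ℕ => ∏ k, x k ^ m k := by
  have haeval : (MvPolynomial.aeval x).toLinearMap ∘ MvPolynomial.basisMonomials ι R =
      fun m : ι →₀ ℕ => ∏ k, x k ^ m k := by
    ext m
    simp [MvPolynomial.aeval_monomial, Finsupp.prod_fintype]
  rw [← haeval]
  exact (MvPolynomial.basisMonomials ι R).linearIndependent.map' _ (LinearMap.ker_eq_bot.2 hx)

section LaurentMonomial

section CommGroupWithZero

variable {L ι : Type*} [CommGroupWithZero L] [Fintype ι]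

/-- The Laurent monomial `∏ k, x k ^ v k` as a homomorphism in its exponent vector `v`. The exponent
group is written multiplicatively. -/
def laurentMonomial (x : ι → L) (hx : ∀ k, x k ≠ 0) : Multiplicative (ι → ℤ) →* L where
  toFun v := ∏ k, x k ^ v.toAdd k
  map_one' := by simp only [toAdd_one, Pi.zero_apply, zpow_zero, Finset.prod_const_one]
  map_mul' v w := by
    simp only [toAdd_mul, Pi.add_apply, zpow_add₀ (hx _), Finset.prod_mul_distrib]

theorem laurentMonomial_ofAdd {x : ι → L} (hx : ∀ k, x k ≠ 0) (v : ι → ℤ) :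
    laurentMonomial x hx (.ofAdd v) = ∏ k, x k ^ v k :=
  rfl

theorem laurentMonomial_single [DecidableEq ι] {x : ι → L} (hx : ∀ k, x k ≠ 0) (k : ι) :
    laurentMonomial x hx (.ofAdd (Pi.single k 1)) = x k := by
  rw [laurentMonomial_ofAdd, Fintype.prod_eq_single k fun j hj => by simp [hj]]
  simp

end CommGroupWithZero

variable {K L ι : Type*} [Field K] [Field L] [Algebra K L] [Fintype ι] {x : ι → L}

theorem adjoin_range_laurentMonomial_eq_top (hx : ∀ k, x k ≠ 0)
    (hgen : IntermediateField.adjoin K (Set.range x) = ⊤) :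
    IntermediateField.adjoin K (Set.range (laurentMonomial x hx)) = ⊤ := by
  classical
  rw [eq_top_iff, ← hgen]
  refine IntermediateField.adjoin.mono K _ _ (Set.range_subset_iff.2 fun k => ?_)
  exact ⟨_, laurentMonomial_single hx k⟩

/-- Finitely many Laurent monomials become ordinary monomials after division by a common one. -/
theorem linearIndependent_laurentMonomial (hx : AlgebraicIndependent K x) :
    LinearIndependent K (laurentMonomial x hx.ne_zero) := by
  rw [linearIndependent_iff_finset_linearIndependent]
  intro s
  obtain ⟨u, hu⟩ := (s.finite_toSet.image Multiplicative.toAdd).bddBelow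
  let e (v : s) : ι →₀ ℕ := Finsupp.equivFunOnFinite.symm fun k => (v.1.toAdd k - u k).toNat
  have he (v : s) (k : ι) : (e v k : ℤ) = v.1.toAdd k - u k :=
    Int.toNat_of_nonneg (sub_nonneg.2 (hu (Set.mem_image_of_mem _ v.2) k))
  have he_injective : Function.Injective e := fun v w hvw => by
    refine Subtype.ext (Multiplicative.toAdd.injective (funext fun k => ?_))
    exact sub_left_injective ((he v k).symm.trans (hvw ▸ he w k))
  have hmul : (fun v : s => laurentMonomial x hx.ne_zero v) =
      fun v => laurentMonomial x hx.ne_zero (.ofAdd u) * ∏ k, x k ^ e v k := by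
    ext v
    simp only [← zpow_natCast, he]
    rw [← laurentMonomial_ofAdd hx.ne_zero fun k => v.1.toAdd k - u k, ← map_mul, ← ofAdd_add]
    exact congrArg _ (congrArg Multiplicative.ofAdd (add_sub_cancel u v.1.toAdd).symm)
  have hu_ne_zero : laurentMonomial x hx.ne_zero (.ofAdd u) ≠ 0 :=
    ((Group.isUnit _).map (laurentMonomial x hx.ne_zero)).ne_zero
  change LinearIndependent K fun v : s => laurentMonomial x hx.ne_zero v
  rw [hmul]
  exact ((linearIndependent_prod_pow hx).comp e he_injective).map'
    (LinearMap.mulLeft K (laurentMonomial x hx.ne_zero (.ofAdd u)))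
    (LinearMap.ker_eq_bot.2 (mul_right_injective₀ hu_ne_zero))

end LaurentMonomial

section RationalFunctionField

variable (K : Type) [Field K] (I : Type)

theorem algebraicIndependent_Xvar : AlgebraicIndependent K (Xvar K I) :=
  (MvPolynomial.algebraicIndependent_X I K).map'
    (f := IsScalarTower.toAlgHom K (MvPolynomial I K) (RFF K I))
    (FaithfulSMul.algebraMap_injective (MvPolynomial I K) (RFF K I))

theorem adjoin_range_Xvar_eq_top : IntermediateField.adjoin K (Set.range (Xvar K I)) = ⊤ := by
  have hrange : (IsScalarTower.toAlgHom K (MvPolynomial I K) (RFF K I)).range =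
      Algebra.adjoin K (Set.range (Xvar K I)) := by
    rw [← Algebra.map_top, ← MvPolynomial.adjoin_range_X, AlgHom.map_adjoin, ← Set.range_comp]
    rfl
  rw [← IsFractionRing.algHom_fieldRange_eq_of_comp_eq_of_range_eq (f := AlgHom.id K (RFF K I))
    rfl hrange]
  exact AlgHom.fieldRange_eq_top.2 Function.surjective_id

end RationalFunctionField

theorem degree_of_monomial_subfield_general {K L ι : Type*} [Field K] [Field L] [Algebra K L]
    [Fintype ι] [DecidableEq ι] {x : ι → L} (hx : AlgebraicIndependent K x)
    (hgen : IntermediateField.adjoin K (Set.range x) = ⊤) (a : Matrix ι ι ℤ) (hD : a.det ≠ 0) :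
    FiniteDimensional (IntermediateField.adjoin K (Set.range fun i => ∏ k, x k ^ a i k)) L ∧
      Module.finrank (IntermediateField.adjoin K (Set.range fun i => ∏ k, x k ^ a i k)) L =
        a.det.natAbs := by
  let H := Subgroup.closure (Set.range fun i => Multiplicative.ofAdd (a i))
  have hindex : H.index = a.det.natAbs := index_closure_range_ofAdd_row hD
  have : H.FiniteIndex := ⟨hindex ▸ Int.natAbs_ne_zero.2 hD⟩
  have hadjoin : IntermediateField.adjoin K (laurentMonomial x hx.ne_zero '' H) =
      IntermediateField.adjoin K (Set.range fun i => ∏ k, x k ^ a i k) := by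
    rw [adjoin_image_subgroup_closure, ← Set.range_comp]
    rfl
  rw [← hadjoin, ← hindex]
  exact finiteDimensional_and_finrank_adjoin_image_eq_index
    (linearIndependent_laurentMonomial hx)
    (adjoin_range_laurentMonomial_eq_top hx.ne_zero hgen) H

/-- **Degree of a monomial subfield (Lemma 2.11).**
Let `K(x₁,…,xₙ)` be the rational function field over a field `K` and let
`f_i = Π_{k=1}^n x_k^{a_{ik}}` (`1 ≤ i ≤ n`) be Laurent monomials with integer exponents.
If the determinant `D` of the matrix `(a_{ik})` is nonzero, then `K(x₁,…,xₙ)` is a finite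
extension of `K(f₁,…,fₙ)` of degree exactly `|D|`. -/
theorem degree_of_monomial_subfield (K : Type) [Field K] (n : ℕ)
    (a : Matrix (Fin n) (Fin n) ℤ) (hD : a.det ≠ 0) :
    FiniteDimensional
        ↥(IntermediateField.adjoin K
          (Set.range fun i : Fin n => ∏ k : Fin n, Xvar K (Fin n) k ^ a i k))
        (RFF K (Fin n)) ∧
      Module.finrank
        ↥(IntermediateField.adjoin K
          (Set.range fun i : Fin n => ∏ k : Fin n, Xvar K (Fin n) k ^ a i k))
        (RFF K (Fin n)) = a.det.natAbs :=
  degree_of_monomial_subfield_general (algebraicIndependent_Xvar K (Fin n))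
    (adjoin_range_Xvar_eq_top K (Fin n)) a hD
end
end
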